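/- The essential image of the functor ι : Vec_n → Vec_{n+1} is closed under extensions: if 0 → ι(V') → W → ι(V) → 0 is a short exact sequence in Vec_{n+1} with V, V' objects of Vec_n, then W is isomorphic in Vec_{n+1} to ι(V'') for some object V'' of Vec_n. -/

import Mathlib

/-!
Let `Φ : Fin (m + 2) ⥤ Fin (m + 1)` be the collapse defining `ι` (`iotaIndexFunctor`). Since
`i ≤ Φ(i) + 1` for all `i`, every `W` in `Vec_{n+1}` has a canonical map `W ⟶ ι(δ₀ W)`, where
`δ₀ W` forgets the top space of `W`; its component at `i` is the structure map
`W_i ⟶ W_{Φ(i) + 1}`. This map is an isomorphism when `W` is an extension of `ι(V)` by `ι(V')`, so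
that `V'' = δ₀ W` works.

Because `Φ(Φ(i) + 1) = Φ(i)`, the structure map `ι(V)_i ⟶ ι(V)_{Φ(i) + 1}` is an isomorphism for
every `V`. Short exactness in a functor category is inherited by each evaluation, so the short five
lemma, applied to the evaluations at `i` and at `Φ(i) + 1`, gives the same conclusion for `W`.
-/

/-!
STATEMENT 2: The essential image of `ι : Vec_n → Vec_{n+1}` is closed under extensions:
if `0 → ι(V') → W → ι(V) → 0` is a short exact sequence in `Vec_{n+1}`, then `W` is
isomorphic in `Vec_{n+1}` to `ι(V'')` for some object `V''` of `Vec_n`.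

Here, for `n ≥ 1`, `Vec_n` is `ComposableArrows (FGModuleCat ℂ) (n - 1)`; we write
`n = m + 1`.  The functor `ι` repeats the top vector space (the object at position `0`)
with the identity map; it is precomposition with the monotone map `Fin (m + 2) → Fin (m + 1)`,
`0, 1 ↦ 0`, `k + 1 ↦ k` (i.e. `Fin.predAbove 0`).
-/

open CategoryTheory Limits

/-- The monotone surjection `Fin (m + 2) → Fin (m + 1)` collapsing `0` and `1` to `0`,
viewed as a functor. -/
def iotaIndexFunctor (m : ℕ) : Fin (m + 2) ⥤ Fin (m + 1) :=
  ((Fin.predAbove_right_monotone (0 : Fin (m + 1)))).functor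

/-- The functor `ι : Vec_n ⥤ Vec_{n+1}` (with `n = m + 1`) which sends the diagram
`V_n → V_{n-1} → ⋯ → V_1` to `V_n →[id] V_n → V_{n-1} → ⋯ → V_1`, repeating the top
vector space with the identity map. -/
def iota (m : ℕ) :
    ComposableArrows (FGModuleCat ℂ) m ⥤ ComposableArrows (FGModuleCat ℂ) (m + 1) :=
  ComposableArrows.whiskerLeftFunctor (iotaIndexFunctor m)

theorem le_succ_iotaIndexFunctor_obj (m : ℕ) (i : Fin (m + 2)) :
    i ≤ ((iotaIndexFunctor m).obj i).succ := by
  change i ≤ (Fin.predAbove 0 i).succ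
  cases i using Fin.cases <;> simp

theorem iotaIndexFunctor_obj_succ (m : ℕ) (j : Fin (m + 1)) :
    (iotaIndexFunctor m).obj j.succ = j := by
  change Fin.predAbove 0 j.succ = j
  simp

/-- The natural transformation expressing the inequalities `i ≤ Φ(i) + 1`, where `Φ` is the
collapse defining `ι`. -/
def iotaIndexUnit (m : ℕ) : 𝟭 (Fin (m + 2)) ⟶ iotaIndexFunctor m ⋙ Fin.succFunctor (m + 1) where
  app i := homOfLE (le_succ_iotaIndexFunctor_obj m i)

/-- The structure maps `ι(V)_i ⟶ ι(V)_{Φ(i) + 1}` are isomorphisms, being images under `V` of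
morphisms between equal indices. -/
theorem isIso_iota_obj_map_iotaIndexUnit (m : ℕ) (V : ComposableArrows (FGModuleCat ℂ) m)
    (i : Fin (m + 2)) : IsIso (((iota m).obj V).map ((iotaIndexUnit m).app i)) := by
  have h : IsIso ((iotaIndexFunctor m).map ((iotaIndexUnit m).app i)) :=
    ⟨homOfLE (iotaIndexFunctor_obj_succ m _).le, Subsingleton.elim _ _, Subsingleton.elim _ _⟩
  change IsIso (V.map ((iotaIndexFunctor m).map ((iotaIndexUnit m).app i)))
  infer_instance

/-- The essential image of `ι` is closed under extensions: given a short exact sequence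
`0 → ι(V') → W → ι(V) → 0` in `Vec_{n+1}`, the middle object `W` is isomorphic to `ι(V'')`
for some `V''` in `Vec_n`. -/
theorem iota_essImage_closed_under_extensions (m : ℕ)
    (V V' : ComposableArrows (FGModuleCat ℂ) m)
    (W : ComposableArrows (FGModuleCat ℂ) (m + 1))
    (f : (iota m).obj V' ⟶ W) (g : W ⟶ (iota m).obj V) (w : f ≫ g = 0)
    (hse : (ShortComplex.mk f g w).ShortExact) :
    ∃ V'' : ComposableArrows (FGModuleCat ℂ) m, Nonempty (W ≅ (iota m).obj V'') := by
  have hW (i : Fin (m + 2)) : IsIso (W.map ((iotaIndexUnit m).app i)) := by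
    have hex (j : Fin (m + 2)) := hse.map_of_exact ((evaluation (Fin (m + 2)) (FGModuleCat ℂ)).obj j)
    let φ := (ShortComplex.mk f g w).mapNatTrans
      ((evaluation (Fin (m + 2)) (FGModuleCat ℂ)).map ((iotaIndexUnit m).app i))
    have h₁ : IsIso φ.τ₁ := isIso_iota_obj_map_iotaIndexUnit m V' i
    have h₃ : IsIso φ.τ₃ := isIso_iota_obj_map_iotaIndexUnit m V i
    exact ShortComplex.isIso₂_of_shortExact_of_isIso₁₃ φ (hex _) (hex _)
  let η : W ⟶ (iota m).obj W.δ₀ := Functor.whiskerRight (iotaIndexUnit m) W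
  have hη (i : Fin (m + 2)) : IsIso (η.app i) := hW i
  have : IsIso η := NatIso.isIso_of_isIso_app η
  exact ⟨W.δ₀, ⟨asIso η⟩⟩
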